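/- Let ϑ₁, ϑ₂, ϑ₃, ϑ₄ be Beurling weights on ℝ^d and 1 ≤ p, q, r < ∞. If the set inclusion A^{p,1,q,r}_{ϑ₁,ϑ₂}(ℝ^d) ⊆ A^{p,1,q,r}_{ϑ₃,ϑ₄}(ℝ^d) holds, then the inclusion is automatically continuous: there exists c > 0 such that ‖f‖_{A_{ϑ₃,ϑ₄}} ≤ c·‖f‖_{A_{ϑ₁,ϑ₂}} for all f ∈ A^{p,1,q,r}_{ϑ₁,ϑ₂}(ℝ^d). -/

import Mathlib

open MeasureTheory Filter Topology
open scoped ENNReal NNReal BigOperators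

noncomputable section

/-- The unit cube `α + [0,1)^d` at the integer point `α ∈ ℤ^d`. -/
def cube {d : ℕ} (α : Fin d → ℤ) : Set (Fin d → ℝ) :=
  Set.univ.pi fun i => Set.Ico (α i : ℝ) ((α i : ℝ) + 1)

/-- The weighted amalgam norm `‖f‖_{pq,ω}` of the space `(L^p_ω, ℓ^q)`. -/
def amalgamNorm {d : ℕ} (p q : ℝ) (ω : (Fin d → ℝ) → ℝ) (f : (Fin d → ℝ) → ℂ) : ℝ≥0∞ :=
  (∑' α : Fin d → ℤ,
      (eLpNorm (fun x => ω x • f x) (ENNReal.ofReal p) (volume.restrict (cube α))) ^ q) ^ (1 / q)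

/-- Membership in the weighted amalgam space `(L^p_ω, ℓ^q)`. -/
def MemAmalgam {d : ℕ} (p q : ℝ) (ω : (Fin d → ℝ) → ℝ) (f : (Fin d → ℝ) → ℂ) : Prop :=
  Measurable f ∧ amalgamNorm p q ω f < ⊤

/-- A Beurling weight: measurable, `ϑ ≥ 1` and submultiplicative. -/
def IsBeurling {d : ℕ} (ϑ : (Fin d → ℝ) → ℝ) : Prop :=
  Measurable ϑ ∧ (∀ x, 1 ≤ ϑ x) ∧ ∀ x y, ϑ (x + y) ≤ ϑ x * ϑ y

/-- The Fourier transform `f̂(ξ) = ∫ f(x) e^{-2πi⟨x,ξ⟩} dx`. -/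
def fourierT {d : ℕ} (f : (Fin d → ℝ) → ℂ) (ξ : Fin d → ℝ) : ℂ :=
  ∫ x : Fin d → ℝ,
    Complex.exp (-(2 * (Real.pi : ℂ) * Complex.I * ∑ i, (x i : ℂ) * (ξ i : ℂ))) * f x

/-- The norm of `A^{p,1,q,r}_{ϑ₁,ϑ₂}(ℝ^d)`. -/
def ANorm {d : ℕ} (p q r : ℝ) (ϑ₁ ϑ₂ : (Fin d → ℝ) → ℝ) (f : (Fin d → ℝ) → ℂ) : ℝ≥0∞ :=
  amalgamNorm p 1 ϑ₁ f + amalgamNorm q r ϑ₂ (fourierT f)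

/-- Membership in `A^{p,1,q,r}_{ϑ₁,ϑ₂}(ℝ^d)`. -/
def MemA {d : ℕ} (p q r : ℝ) (ϑ₁ ϑ₂ : (Fin d → ℝ) → ℝ) (f : (Fin d → ℝ) → ℂ) : Prop :=
  MemAmalgam p 1 ϑ₁ f ∧ MemAmalgam q r ϑ₂ (fourierT f)

/-- Convolution `(f∗g)(x) = ∫ f(x−t)g(t) dt`. -/
def convF {d : ℕ} (f g : (Fin d → ℝ) → ℂ) (x : Fin d → ℝ) : ℂ :=
  ∫ t : Fin d → ℝ, f (x - t) * g t

/-- `ϑ ≺ ϑ'` : domination of weights up to a constant. -/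
def Prec {d : ℕ} (ϑ ϑ' : (Fin d → ℝ) → ℝ) : Prop :=
  ∃ C : ℝ, 0 < C ∧ ∀ x, ϑ x ≤ C * ϑ' x

/-- The Beurling–Domar condition `∑_{n≥1} log ϑ(nx)/n² < ∞`. -/
def BeurlingDomar {d : ℕ} (ϑ : (Fin d → ℝ) → ℝ) : Prop :=
  ∀ x : Fin d → ℝ, Summable fun n : ℕ => Real.log (ϑ ((n : ℝ) • x)) / (n : ℝ) ^ 2

/-- `w` does not tend to zero as `|x| → ∞`. -/
def NotVanishingAtInfty {d : ℕ} (w : (Fin d → ℝ) → ℝ) : Prop :=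
  ∃ δ : ℝ, 0 < δ ∧ ∀ R : ℝ, 0 < R → ∃ x : Fin d → ℝ, R < ‖x‖ ∧ δ ≤ w x

end

section helpers

lemma semi_complete {E : Type*} [SeminormedAddCommGroup E]
    (h : ∀ u : ℕ → E, Summable (fun n => ‖u n‖) →
      ∃ a, Tendsto (fun n => ∑ i ∈ Finset.range n, u i) atTop (𝓝 a)) :
    CompleteSpace E := by
  apply Metric.complete_of_cauchySeq_tendsto
  intro u hu
  obtain ⟨f, hf₁, hf₂⟩ := Metric.exists_subseq_summable_dist_of_cauchySeq u hu
  simp only [dist_eq_norm] at hf₂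
  let v n := u (f (n + 1)) - u (f n)
  have hv_sum : (fun n => (∑ i ∈ Finset.range n, v i)) = fun n => u (f n) - u (f 0) := by
    ext n
    exact Finset.sum_range_sub (u ∘ f) n
  obtain ⟨a, ha⟩ := h v hf₂
  refine ⟨a + u (f 0), ?_⟩
  refine tendsto_nhds_of_cauchySeq_of_subseq hu hf₁.tendsto_atTop ?_
  rw [hv_sum] at ha
  have h₁ : Tendsto (fun n => u (f n) - u (f 0) + u (f 0)) atTop (𝓝 (a + u (f 0))) :=
    Tendsto.add_const _ ha
  simpa only [sub_add_cancel] using! h₁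

lemma ubp_normed {E : Type*} [SeminormedAddCommGroup E] [NormedSpace ℂ E] [CompleteSpace E]
    (N : ℕ → Seminorm ℂ E) (hc : ∀ i, ∃ C : ℝ, ∀ x, N i x ≤ C * ‖x‖)
    (hb : ∀ x, ∃ B, ∀ i, N i x ≤ B) : ∃ C : ℝ, 0 < C ∧ ∀ i x, N i x ≤ C * ‖x‖ := by
  have hbdd : BddAbove (Set.range N) := by
    rw [Seminorm.bddAbove_range_iff]
    intro x
    obtain ⟨B, hB⟩ := hb x
    exact ⟨B, by rintro _ ⟨i, rfl⟩; exact hB i⟩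
  have hcont : ∀ i, Continuous (N i) := by
    intro i
    obtain ⟨C, hC⟩ := hc i
    have h2 : N i ≤ (Real.toNNReal C) • normSeminorm ℂ E := by
      intro x
      refine (hC x).trans ?_
      show C * ‖x‖ ≤ (Real.toNNReal C : ℝ) * ‖x‖
      exact mul_le_mul_of_nonneg_right (Real.le_coe_toNNReal C) (norm_nonneg _)
    refine Seminorm.continuous_of_le ?_ h2
    exact (continuous_norm (E := E)).const_smul (Real.toNNReal C)
  have := Seminorm.continuous_iSup N hcont hbdd
  rw [← Seminorm.coe_iSup_eq hbdd] at this
  obtain ⟨C, hC, h⟩ := Seminorm.bound_of_continuous_normedSpace _ this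
  exact ⟨C, hC, fun i x => (le_ciSup hbdd i x).trans (h x)⟩

lemma ubp {E : Type*} [AddCommGroup E] [Module ℂ E] (s : Seminorm ℂ E)
    (hs : ∀ u : ℕ → E, Summable (fun n => s (u n)) →
      ∃ a, Tendsto (fun n => s ((∑ i ∈ Finset.range n, u i) - a)) atTop (𝓝 0))
    (N : ℕ → Seminorm ℂ E) (hc : ∀ i, ∃ C : ℝ, ∀ x, N i x ≤ C * s x)
    (hb : ∀ x, ∃ B, ∀ i, N i x ≤ B) : ∃ C : ℝ, 0 < C ∧ ∀ i x, N i x ≤ C * s x := by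
  let i1 : SeminormedAddCommGroup E := s.toAddGroupSeminorm.toSeminormedAddCommGroup
  have hn : ∀ x : E, ‖x‖ = s x := fun _ => rfl
  let i2 : NormedSpace ℂ E := ⟨fun c x => by rw [hn, hn, map_smul_eq_mul]⟩
  have : CompleteSpace E := by
    apply semi_complete
    intro u hu
    obtain ⟨a, ha⟩ := hs u hu
    exact ⟨a, tendsto_iff_norm_sub_tendsto_zero.2 ha⟩
  exact ubp_normed N hc hb

/-- the `L^p` functional on nonnegative functions -/
noncomputable def LL {X : Type*} [MeasurableSpace X] (p : ℝ) (μ : Measure X) (G : X → ℝ≥0∞) : ℝ≥0∞ :=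
  (∫⁻ x, G x ^ p ∂μ) ^ (1 / p)

section LLs
variable {X : Type*} [MeasurableSpace X] {p : ℝ} {μ : Measure X} {G H : X → ℝ≥0∞}

lemma LL_mono (hp : 1 ≤ p) (h : G ≤ᵐ[μ] H) : LL p μ G ≤ LL p μ H := by
  have : 0 < p := by linarith
  unfold LL
  gcongr ?_ ^ _
  refine lintegral_mono_ae ?_
  filter_upwards [h] with x hx
  gcongr

lemma LL_add (hp : 1 ≤ p) (hG : Measurable G) (hH : Measurable H) :
    LL p μ (fun x => G x + H x) ≤ LL p μ G + LL p μ H :=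
  ENNReal.lintegral_Lp_add_le hG.aemeasurable hH.aemeasurable hp

lemma LL_zero (hp : 1 ≤ p) : LL p μ (fun _ => 0) = 0 := by
  have : 0 < p := by linarith
  simp [LL, this]

lemma LL_mul (hp : 1 ≤ p) (hG : Measurable G) (c : ℝ≥0∞) :
    LL p μ (fun x => c * G x) = c * LL p μ G := by
  have : 0 < p := by linarith
  unfold LL
  simp_rw [ENNReal.mul_rpow_of_nonneg _ _ this.le]
  rw [lintegral_const_mul _ (hG.pow_const p), ENNReal.mul_rpow_of_nonneg _ _ (by positivity),
    one_div, ENNReal.rpow_rpow_inv this.ne']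

lemma rpow_iSup' (hp : 0 < p) (u : ℕ → ℝ≥0∞) : (⨆ n, u n) ^ p = ⨆ n, u n ^ p :=
  (ENNReal.orderIsoRpow p hp).map_iSup u

lemma LL_iSup (hp : 1 ≤ p) {F : ℕ → X → ℝ≥0∞} (hF : ∀ n, Measurable (F n)) (hm : Monotone F) :
    LL p μ (fun x => ⨆ n, F n x) = ⨆ n, LL p μ (F n) := by
  have h0 : 0 < p := by linarith
  unfold LL
  simp_rw [rpow_iSup' h0]
  rw [lintegral_iSup (fun n => (hF n).pow_const p), rpow_iSup' (by positivity)]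
  intro a b hab x
  have := hm hab x
  dsimp
  gcongr

lemma LL_prob [IsProbabilityMeasure μ] (hp : 1 ≤ p) (hG : Measurable G) :
    ∫⁻ x, G x ∂μ ≤ LL p μ G := by
  have := eLpNorm'_le_eLpNorm'_of_exponent_le (f := G) zero_lt_one hp μ hG.aestronglyMeasurable
  simpa [eLpNorm', LL] using this
end LLs

/-- amalgam functional -/
noncomputable def AM {d : ℕ} (p q : ℝ) (G : (Fin d → ℝ) → ℝ≥0∞) : ℝ≥0∞ :=
  LL q Measure.count (fun α : Fin d → ℤ => LL p (volume.restrict (cube α)) G)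

section AMs
variable {d : ℕ} {p q : ℝ} {G H : (Fin d → ℝ) → ℝ≥0∞}

lemma AM_mono (hp : 1 ≤ p) (hq : 1 ≤ q) (h : G ≤ᵐ[volume] H) : AM p q G ≤ AM p q H :=
  LL_mono hq (Eventually.of_forall fun _ => LL_mono hp (ae_restrict_of_ae h))

lemma AM_zero (hp : 1 ≤ p) (hq : 1 ≤ q) : AM (d := d) p q (fun _ => 0) = 0 := by
  simp [AM, LL_zero hp, LL_zero hq]

lemma AM_mul (hp : 1 ≤ p) (hq : 1 ≤ q) (hG : Measurable G) (c : ℝ≥0∞) :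
    AM p q (fun x => c * G x) = c * AM p q G := by
  simp only [AM, LL_mul hp hG]
  exact LL_mul hq .of_discrete c

lemma AM_add (hp : 1 ≤ p) (hq : 1 ≤ q) (hG : Measurable G) (hH : Measurable H) :
    AM p q (fun x => G x + H x) ≤ AM p q G + AM p q H :=
  (LL_mono hq (Eventually.of_forall fun _ => LL_add hp hG hH)).trans
    (LL_add hq .of_discrete .of_discrete)

lemma AM_iSup (hp : 1 ≤ p) (hq : 1 ≤ q) {F : ℕ → (Fin d → ℝ) → ℝ≥0∞}
    (hF : ∀ n, Measurable (F n)) (hm : Monotone F) :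
    AM p q (fun x => ⨆ n, F n x) = ⨆ n, AM p q (F n) := by
  simp only [AM, LL_iSup hp hF hm]
  exact LL_iSup hq (fun _ => .of_discrete)
    fun a b hab _ => LL_mono hp (Eventually.of_forall (hm hab))

lemma AM_tsum (hp : 1 ≤ p) (hq : 1 ≤ q) {F : ℕ → (Fin d → ℝ) → ℝ≥0∞}
    (hF : ∀ n, Measurable (F n)) :
    AM p q (fun x => ∑' n, F n x) ≤ ∑' n, AM p q (F n) := by
  have h1 : ∀ n, Measurable fun x => ∑ i ∈ Finset.range n, F i x := fun n =>
    Finset.measurable_fun_sum _ fun i _ => hF i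
  simp_rw [ENNReal.tsum_eq_iSup_nat]
  rw [AM_iSup hp hq h1]
  · refine iSup_mono fun n => ?_
    induction n with
    | zero => simp [AM_zero hp hq]
    | succ n ih =>
      simp_rw [Finset.sum_range_succ]
      exact (AM_add hp hq (h1 n) (hF n)).trans (by gcongr)
  · intro a b hab x
    exact Finset.sum_le_sum_of_subset (Finset.range_mono hab)

lemma amalgam_eq (hp : 1 ≤ p) (ω : (Fin d → ℝ) → ℝ) (f : (Fin d → ℝ) → ℂ) :
    amalgamNorm p q ω f = AM p q (fun x => ‖ω x‖ₑ * ‖f x‖ₑ) := by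
  have h0 : 0 < p := by linarith
  unfold amalgamNorm AM LL
  rw [lintegral_count]
  congr 2
  ext α
  congr 1
  rw [eLpNorm_eq_lintegral_rpow_enorm_toReal (by simpa using h0) ENNReal.ofReal_ne_top,
    ENNReal.toReal_ofReal h0.le]
  have h : ∀ x, ‖ω x • f x‖ₑ = ‖ω x‖ₑ * ‖f x‖ₑ := fun x => enorm_smul _ _
  simp only [h]

lemma cube_prob (α : Fin d → ℤ) : IsProbabilityMeasure (volume.restrict (cube α)) := by
  constructor
  rw [Measure.restrict_apply_univ, cube, Real.volume_pi_Ico]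
  simp

lemma L1_le (hp : 1 ≤ p) (hG : Measurable G) : ∫⁻ x, G x ≤ AM p 1 G := by
  have h1 : (⋃ α : Fin d → ℤ, cube α) = Set.univ := by
    refine Set.eq_univ_of_forall fun x => Set.mem_iUnion.2 ⟨fun i => ⌊x i⌋, fun i _ => ?_⟩
    exact ⟨Int.floor_le _, Int.lt_floor_add_one _⟩
  have h2 := lintegral_iUnion_le (μ := volume) (fun α : Fin d → ℤ => cube α) G
  rw [h1, Measure.restrict_univ] at h2
  refine h2.trans ?_
  simp only [AM, LL, lintegral_count, ENNReal.rpow_one, one_div, inv_one]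
  refine ENNReal.tsum_le_tsum fun α => ?_
  have := cube_prob α
  simpa [LL] using LL_prob (μ := volume.restrict (cube α)) hp hG

end AMs

section FT
variable {d : ℕ} {p q r : ℝ}

lemma kernel_norm (x ξ : Fin d → ℝ) :
    ‖Complex.exp (-(2 * (Real.pi : ℂ) * Complex.I * ∑ i, (x i : ℂ) * (ξ i : ℂ)))‖ = 1 := by
  have : (-(2 * (Real.pi : ℂ) * Complex.I * ∑ i, (x i : ℂ) * (ξ i : ℂ)))
      = ((-(2 * Real.pi * ∑ i, x i * ξ i) : ℝ) : ℂ) * Complex.I := by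
    push_cast; ring
  rw [this, Complex.norm_exp_ofReal_mul_I]

lemma kernel_int {f : (Fin d → ℝ) → ℂ} (hf : Integrable f) (ξ : Fin d → ℝ) :
    Integrable (fun x : Fin d → ℝ =>
      Complex.exp (-(2 * (Real.pi : ℂ) * Complex.I * ∑ i, (x i : ℂ) * (ξ i : ℂ))) * f x) := by
  refine hf.bdd_mul (c := 1) ?_ (Eventually.of_forall fun x => (kernel_norm x ξ).le)
  exact Continuous.aestronglyMeasurable (by fun_prop)

lemma fourierT_add {f g : (Fin d → ℝ) → ℂ} (hf : Integrable f) (hg : Integrable g) :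
    fourierT (f + g) = fourierT f + fourierT g := by
  ext ξ
  simp only [fourierT, Pi.add_apply, mul_add]
  exact integral_add (kernel_int hf ξ) (kernel_int hg ξ)

lemma fourierT_smul (c : ℂ) (f : (Fin d → ℝ) → ℂ) : fourierT (c • f) = c • fourierT f := by
  ext ξ
  simp only [fourierT, Pi.smul_apply, smul_eq_mul]
  rw [← integral_const_mul]
  congr 1
  ext x
  ring

/-- the regularity available for members of our spaces -/
def Good (f : (Fin d → ℝ) → ℂ) : Prop := Measurable f ∧ Integrable f ∧ Measurable (fourierT f)

lemma Good.add {f g : (Fin d → ℝ) → ℂ} (hf : Good f) (hg : Good g) : Good (f + g) :=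
  ⟨hf.1.add hg.1, hf.2.1.add hg.2.1, by
    rw [fourierT_add hf.2.1 hg.2.1]; exact hf.2.2.add hg.2.2⟩

lemma Good.smul {f : (Fin d → ℝ) → ℂ} (hf : Good f) (c : ℂ) : Good (c • f) :=
  ⟨hf.1.const_smul c, hf.2.1.smul c, by
    rw [fourierT_smul]; exact hf.2.2.const_smul c⟩

lemma ANorm_eq (hp : 1 ≤ p) (hq : 1 ≤ q) (w v : (Fin d → ℝ) → ℝ) (f : (Fin d → ℝ) → ℂ) :
    ANorm p q r w v f = AM p 1 (fun x => ‖w x‖ₑ * ‖f x‖ₑ)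
      + AM q r (fun x => ‖v x‖ₑ * ‖fourierT f x‖ₑ) := by
  rw [ANorm, amalgam_eq hp, amalgam_eq hq]

lemma amalgam_tsum_le (hp : 1 ≤ p) (hq : 1 ≤ q) {w : (Fin d → ℝ) → ℝ} (hw : Measurable w)
    {h : (Fin d → ℝ) → ℂ} {F : ℕ → (Fin d → ℝ) → ℂ} (hF : ∀ n, Measurable (F n))
    (hle : ∀ᵐ x, ‖h x‖ₑ ≤ ∑' n, ‖F n x‖ₑ) :
    amalgamNorm p q w h ≤ ∑' n, amalgamNorm p q w (F n) := by
  simp only [amalgam_eq hp]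
  refine (AM_mono hp hq ?_).trans (AM_tsum hp hq (F := fun n x => ‖w x‖ₑ * ‖F n x‖ₑ)
    fun n => hw.enorm.mul (hF n).enorm)
  filter_upwards [hle] with x hx
  rw [ENNReal.tsum_mul_left]
  gcongr

lemma amalgam_add (hp : 1 ≤ p) (hq : 1 ≤ q) {w : (Fin d → ℝ) → ℝ} (hw : Measurable w)
    {f g : (Fin d → ℝ) → ℂ} (hf : Measurable f) (hg : Measurable g) :
    amalgamNorm p q w (f + g) ≤ amalgamNorm p q w f + amalgamNorm p q w g := by
  simp only [amalgam_eq hp]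
  refine (AM_mono hp hq (Eventually.of_forall fun x => ?_)).trans
    (AM_add hp hq (hw.enorm.mul hf.enorm) (hw.enorm.mul hg.enorm))
  dsimp
  rw [← mul_add]
  gcongr
  exact enorm_add_le _ _

lemma amalgam_smul (hp : 1 ≤ p) (hq : 1 ≤ q) {w : (Fin d → ℝ) → ℝ} (hw : Measurable w)
    {f : (Fin d → ℝ) → ℂ} (hf : Measurable f) (c : ℂ) :
    amalgamNorm p q w (c • f) = ‖c‖ₑ * amalgamNorm p q w f := by
  simp only [amalgam_eq hp]
  rw [← AM_mul (G := fun x => ‖w x‖ₑ * ‖f x‖ₑ) hp hq (hw.enorm.mul hf.enorm)]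
  congr 1
  ext x
  simp only [Pi.smul_apply, smul_eq_mul, enorm_mul]
  ring

lemma ANorm_add (hp : 1 ≤ p) (hq : 1 ≤ q) (hr : 1 ≤ r) {w v : (Fin d → ℝ) → ℝ}
    (hw : Measurable w) (hv : Measurable v) {f g : (Fin d → ℝ) → ℂ} (hf : Good f) (hg : Good g) :
    ANorm p q r w v (f + g) ≤ ANorm p q r w v f + ANorm p q r w v g := by
  unfold ANorm
  rw [fourierT_add hf.2.1 hg.2.1]
  refine (add_le_add (amalgam_add hp le_rfl hw hf.1 hg.1)
    (amalgam_add hq hr hv hf.2.2 hg.2.2)).trans (le_of_eq (by ring))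

lemma ANorm_smul (hp : 1 ≤ p) (hq : 1 ≤ q) (hr : 1 ≤ r) {w v : (Fin d → ℝ) → ℝ}
    (hw : Measurable w) (hv : Measurable v) {f : (Fin d → ℝ) → ℂ} (hf : Good f) (c : ℂ) :
    ANorm p q r w v (c • f) = ‖c‖ₑ * ANorm p q r w v f := by
  unfold ANorm
  rw [fourierT_smul, amalgam_smul hp le_rfl hw hf.1, amalgam_smul hq hr hv hf.2.2, mul_add]

lemma L1_le_ANorm (hp : 1 ≤ p) {w v : (Fin d → ℝ) → ℝ} (hw : IsBeurling w)
    {f : (Fin d → ℝ) → ℂ} (hf : Measurable f) : ∫⁻ x, ‖f x‖ₑ ≤ ANorm p q r w v f := by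
  refine (L1_le hp hf.enorm).trans (le_trans ?_ le_self_add)
  rw [amalgam_eq hp]
  refine AM_mono hp le_rfl (Eventually.of_forall fun x => ?_)
  have : (1 : ℝ≥0∞) ≤ ‖w x‖ₑ := by
    rw [Real.enorm_of_nonneg (by linarith [hw.2.1 x])]
    simpa using hw.2.1 x
  simpa using mul_le_mul_left this ‖f x‖ₑ

lemma MemA.lt_top {w v : (Fin d → ℝ) → ℝ} {f : (Fin d → ℝ) → ℂ} (h : MemA p q r w v f) :
    ANorm p q r w v f < ⊤ := ENNReal.add_lt_top.2 ⟨h.1.2, h.2.2⟩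

lemma memA_iff (hp : 1 ≤ p) {w v : (Fin d → ℝ) → ℝ} (hw : IsBeurling w)
    {f : (Fin d → ℝ) → ℂ} : MemA p q r w v f ↔ Good f ∧ ANorm p q r w v f < ⊤ := by
  constructor
  · intro h
    refine ⟨⟨h.1.1, ⟨h.1.1.aestronglyMeasurable, ?_⟩, h.2.1⟩, h.lt_top⟩
    exact (L1_le_ANorm hp hw h.1.1).trans_lt h.lt_top
  · rintro ⟨h, h'⟩
    have := ENNReal.add_lt_top.1 h'
    exact ⟨⟨h.1, this.1⟩, ⟨h.2.2, this.2⟩⟩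

/-- completeness of the space -/
lemma complete_aux (hp : 1 ≤ p) (hq : 1 ≤ q) (hr : 1 ≤ r) {w v : (Fin d → ℝ) → ℝ}
    (hw : IsBeurling w) (hv : IsBeurling v) (g : ℕ → (Fin d → ℝ) → ℂ) (hg : ∀ n, Good (g n))
    (hsum : ∑' n, ANorm p q r w v (g n) ≠ ⊤) :
    ∃ f : (Fin d → ℝ) → ℂ, Good f ∧
      ∀ n, ANorm p q r w v (f - ∑ i ∈ Finset.range n, g i)
        ≤ ∑' k, ANorm p q r w v (g (k + n)) := by
  have hL1 : ∑' n, ∫⁻ x, ‖g n x‖ₑ ≠ ⊤ :=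
    ne_top_of_le_ne_top hsum (ENNReal.tsum_le_tsum fun n => L1_le_ANorm hp hw (hg n).1)
  have hmeas : ∀ n, Measurable fun x => ‖g n x‖ₑ := fun n => (hg n).1.enorm
  have hL1' : ∫⁻ x, ∑' n, ‖g n x‖ₑ ≠ ⊤ := by
    rwa [lintegral_tsum fun n => (hmeas n).aemeasurable]
  have hae : ∀ᵐ x, Summable fun n => g n x := by
    filter_upwards [ae_lt_top (Measurable.tsum hmeas) hL1'] with x hx
    refine Summable.of_norm ?_
    have := ENNReal.summable_toReal hx.ne
    simpa using this
  have hsumm : Summable fun n => ∫ x, ‖g n x‖ := by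
    have := ENNReal.summable_toReal hL1
    refine this.congr fun n => ?_
    rw [integral_norm_eq_lintegral_enorm (hg n).1.aestronglyMeasurable]
  have hF0m : AEMeasurable (fun x => ∑' n, g n x) := by
    refine aemeasurable_of_tendsto_metrizable_ae (u := atTop)
      (f := fun n x => ∑ i ∈ Finset.range n, g i x)
      (fun n => (Finset.measurable_fun_sum _ fun i _ => (hg i).1).aemeasurable) ?_
    filter_upwards [hae] with x hx
    exact hx.hasSum.tendsto_sum_nat
  let f := hF0m.mk
  have hfe : (fun x => ∑' n, g n x) =ᵐ[volume] f := hF0m.ae_eq_mk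
  have hfm : Measurable f := hF0m.measurable_mk
  have hfI : Integrable f := by
    refine ⟨hfm.aestronglyMeasurable, lt_of_le_of_lt (lintegral_mono_ae ?_) hL1'.lt_top⟩
    filter_upwards [hfe] with x hx
    rw [← hx]
    exact enorm_tsum_le_tsum_enorm
  have hFT : ∀ ξ, HasSum (fun n => fourierT (g n) ξ) (fourierT f ξ) := by
    intro ξ
    have h1 := hasSum_integral_of_summable_integral_norm (fun n => kernel_int (hg n).2.1 ξ)
      (by simpa only [norm_mul, kernel_norm, one_mul] using hsumm)
    have h2 : fourierT f ξ = ∫ x, ∑' n, Complex.exp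
        (-(2 * (Real.pi : ℂ) * Complex.I * ∑ i, (x i : ℂ) * (ξ i : ℂ))) * g n x := by
      unfold fourierT
      refine integral_congr_ae ?_
      filter_upwards [hfe] with x hx
      rw [tsum_mul_left, ← hx]
    rw [h2]
    exact h1
  have hFTm : Measurable (fourierT f) := by
    refine measurable_of_tendsto_metrizable
      (f := fun n ξ => ∑ i ∈ Finset.range n, fourierT (g i) ξ)
      (fun n => Finset.measurable_fun_sum _ fun i _ => (hg i).2.2) ?_
    rw [tendsto_pi_nhds]
    exact fun ξ => (hFT ξ).tendsto_sum_nat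
  have hgf : Good f := ⟨hfm, hfI, hFTm⟩
  have hpart : ∀ n, Good (∑ i ∈ Finset.range n, g i) ∧
      fourierT (∑ i ∈ Finset.range n, g i) = ∑ i ∈ Finset.range n, fourierT (g i) := by
    intro n
    induction n with
    | zero =>
      have h0 : fourierT (0 : (Fin d → ℝ) → ℂ) = 0 := by ext ξ; simp [fourierT]
      simp only [Finset.range_zero, Finset.sum_empty, h0, and_true]
      exact ⟨measurable_zero, integrable_zero _ _ _, by rw [h0]; exact measurable_zero⟩
    | succ n ih =>
      rw [Finset.sum_range_succ, Finset.sum_range_succ, fourierT_add ih.1.2.1 (hg n).2.1, ih.2]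
      exact ⟨ih.1.add (hg n), rfl⟩
  refine ⟨f, hgf, fun n => ?_⟩
  have hsub : fourierT (f - ∑ i ∈ Finset.range n, g i)
      = fourierT f - ∑ i ∈ Finset.range n, fourierT (g i) := by
    have h2 := fourierT_add hgf.2.1 ((hpart n).1.smul (-1)).2.1
    rw [fourierT_smul, (hpart n).2] at h2
    simpa [sub_eq_add_neg] using h2
  unfold ANorm
  rw [ENNReal.tsum_add, hsub]
  refine add_le_add (amalgam_tsum_le hp le_rfl hw.1 (fun k => (hg _).1) ?_)
    (amalgam_tsum_le hq hr hv.1 (fun k => (hg _).2.2) (Eventually.of_forall fun ξ => ?_))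
  · filter_upwards [hfe, hae] with x hx hs
    have h3 : (f - ∑ i ∈ Finset.range n, g i) x = ∑' k, g (k + n) x := by
      rw [Pi.sub_apply, ← hx, Finset.sum_apply, ← hs.sum_add_tsum_nat_add n]
      ring
    rw [h3]
    exact enorm_tsum_le_tsum_enorm
  · have h3 : (fourierT f - ∑ i ∈ Finset.range n, fourierT (g i)) ξ
        = ∑' k, fourierT (g (k + n)) ξ := by
      rw [Pi.sub_apply, ← (hFT ξ).tsum_eq, Finset.sum_apply,
        ← (hFT ξ).summable.sum_add_tsum_nat_add n]
      ring
    rw [h3]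
    exact enorm_tsum_le_tsum_enorm

/-- truncated weights -/
noncomputable def trunc (w : (Fin d → ℝ) → ℝ) (K : ℕ) (x : Fin d → ℝ) : ℝ := min (w x) K

lemma trunc_meas {w : (Fin d → ℝ) → ℝ} (hw : Measurable w) (K : ℕ) : Measurable (trunc w K) :=
  hw.min measurable_const

lemma trunc_enorm {w : (Fin d → ℝ) → ℝ} (hw : IsBeurling w) (K : ℕ) (x : Fin d → ℝ) :
    ‖trunc w K x‖ₑ = min ‖w x‖ₑ (K : ℝ≥0∞) := by
  have h1 : 0 ≤ w x := by linarith [hw.2.1 x]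
  rw [trunc, Real.enorm_of_nonneg (le_min h1 (Nat.cast_nonneg K)), Real.enorm_of_nonneg h1,
    ENNReal.ofReal_min, ENNReal.ofReal_natCast]

lemma amalgam_trunc_le (hp : 1 ≤ p) (hq : 1 ≤ q) {w u : (Fin d → ℝ) → ℝ} (hw : IsBeurling w)
    (hu : IsBeurling u) {f : (Fin d → ℝ) → ℂ} (hf : Measurable f) (K : ℕ) :
    amalgamNorm p q (trunc w K) f ≤ K * amalgamNorm p q u f := by
  simp only [amalgam_eq hp]
  rw [← AM_mul (G := fun x => ‖u x‖ₑ * ‖f x‖ₑ) hp hq (hu.1.enorm.mul hf.enorm)]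
  refine AM_mono hp hq (Eventually.of_forall fun x => ?_)
  have : (1 : ℝ≥0∞) ≤ ‖u x‖ₑ := by
    rw [Real.enorm_of_nonneg (by linarith [hu.2.1 x])]
    simpa using hu.2.1 x
  dsimp
  rw [trunc_enorm hw, ← mul_assoc]
  gcongr
  exact (min_le_right _ _).trans (le_mul_of_one_le_right zero_le this)

lemma amalgam_trunc_sup (hp : 1 ≤ p) (hq : 1 ≤ q) {w : (Fin d → ℝ) → ℝ} (hw : IsBeurling w)
    {f : (Fin d → ℝ) → ℂ} (hf : Measurable f) :
    amalgamNorm p q w f = ⨆ K, amalgamNorm p q (trunc w K) f := by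
  simp only [amalgam_eq hp, trunc_enorm hw]
  rw [← AM_iSup hp hq]
  · congr 1
    ext x
    rw [← ENNReal.iSup_mul]
    congr 1
    have : (⨆ i : ℕ, min ‖w x‖ₑ (i : ℝ≥0∞)) = min ‖w x‖ₑ (⨆ i : ℕ, (i : ℝ≥0∞)) :=
      (inf_iSup_eq _ _).symm
    rw [this, ENNReal.iSup_natCast]
    simp
  · exact fun n => (hw.1.enorm.min measurable_const).mul hf.enorm
  · intro a b hab x
    dsimp
    gcongr

lemma amalgam_trunc_mono (hp : 1 ≤ p) (hq : 1 ≤ q) {w : (Fin d → ℝ) → ℝ} (hw : IsBeurling w)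
    {f : (Fin d → ℝ) → ℂ} : Monotone fun K => amalgamNorm p q (trunc w K) f := by
  intro a b hab
  simp only [amalgam_eq hp, trunc_enorm hw]
  refine AM_mono hp hq (Eventually.of_forall fun x => ?_)
  dsimp
  gcongr

lemma ANorm_trunc_sup (hp : 1 ≤ p) (hq : 1 ≤ q) (hr : 1 ≤ r) {w v : (Fin d → ℝ) → ℝ}
    (hw : IsBeurling w) (hv : IsBeurling v) {f : (Fin d → ℝ) → ℂ} (hf : Good f) :
    ANorm p q r w v f = ⨆ K, ANorm p q r (trunc w K) (trunc v K) f := by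
  unfold ANorm
  rw [amalgam_trunc_sup hp le_rfl hw hf.1, amalgam_trunc_sup hq hr hv hf.2.2]
  exact ENNReal.iSup_add_iSup_of_monotone (amalgam_trunc_mono hp le_rfl hw)
    (amalgam_trunc_mono hq hr hv)

/-- the space as a submodule -/
def VA (hp : 1 ≤ p) (hq : 1 ≤ q) (hr : 1 ≤ r) {w v : (Fin d → ℝ) → ℝ}
    (hw : IsBeurling w) (hv : IsBeurling v) : Submodule ℂ ((Fin d → ℝ) → ℂ) where
  carrier := {f | Good f ∧ ANorm p q r w v f < ⊤}
  add_mem' := fun {f g} hf hg => ⟨hf.1.add hg.1,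
    (ANorm_add hp hq hr hw.1 hv.1 hf.1 hg.1).trans_lt (ENNReal.add_lt_top.2 ⟨hf.2, hg.2⟩)⟩
  zero_mem' := by
    have h0 : fourierT (0 : (Fin d → ℝ) → ℂ) = 0 := by ext ξ; simp [fourierT]
    refine ⟨⟨measurable_zero, integrable_zero _ _ _, by rw [h0]; exact measurable_zero⟩, ?_⟩
    rw [ANorm_eq hp hq, h0]
    simp [AM_zero hp le_rfl, AM_zero hq hr]
  smul_mem' := fun c f hf => ⟨hf.1.smul c, by
    rw [ANorm_smul hp hq hr hw.1 hv.1 hf.1]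
    exact ENNReal.mul_lt_top enorm_lt_top hf.2⟩

/-- seminorm given by a pair of weights -/
noncomputable def semiA {E : Submodule ℂ ((Fin d → ℝ) → ℂ)} (hE : ∀ f ∈ E, Good f)
    (hp : 1 ≤ p) (hq : 1 ≤ q) (hr : 1 ≤ r) (w v : (Fin d → ℝ) → ℝ)
    (hw : Measurable w) (hv : Measurable v) (hfin : ∀ f ∈ E, ANorm p q r w v f < ⊤) :
    Seminorm ℂ E :=
  Seminorm.of (fun f => (ANorm p q r w v f.1).toReal)
    (fun f g => by
      rw [← ENNReal.toReal_add (hfin _ f.2).ne (hfin _ g.2).ne]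
      exact ENNReal.toReal_mono (ENNReal.add_lt_top.2 ⟨hfin _ f.2, hfin _ g.2⟩).ne
        (ANorm_add hp hq hr hw hv (hE _ f.2) (hE _ g.2)))
    (fun c f => by
      have := ANorm_smul hp hq hr hw hv (hE _ f.2) c
      rw [Submodule.coe_smul, this, ENNReal.toReal_mul, toReal_enorm])

end FT

end helpers

/-- a set inclusion between the spaces `A^{p,1,q,r}` with different
weights is automatically a continuous embedding. -/
theorem A_inclusion_continuous {d : ℕ} (p q r : ℝ) (hp : 1 ≤ p) (hq : 1 ≤ q) (hr : 1 ≤ r)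
    (ϑ₁ ϑ₂ ϑ₃ ϑ₄ : (Fin d → ℝ) → ℝ)
    (h1 : IsBeurling ϑ₁) (h2 : IsBeurling ϑ₂) (h3 : IsBeurling ϑ₃) (h4 : IsBeurling ϑ₄)
    (hsub : ∀ f : (Fin d → ℝ) → ℂ, MemA p q r ϑ₁ ϑ₂ f → MemA p q r ϑ₃ ϑ₄ f) :
    ∃ c : ℝ, 0 < c ∧ ∀ f : (Fin d → ℝ) → ℂ, MemA p q r ϑ₁ ϑ₂ f →
      ANorm p q r ϑ₃ ϑ₄ f ≤ ENNReal.ofReal c * ANorm p q r ϑ₁ ϑ₂ f := by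
  let E := VA hp hq hr h1 h2
  have hE : ∀ f ∈ E, Good f := fun f hf => hf.1
  have hEfin : ∀ f ∈ E, ANorm p q r ϑ₁ ϑ₂ f < ⊤ := fun f hf => hf.2
  let s : Seminorm ℂ E := semiA hE hp hq hr ϑ₁ ϑ₂ h1.1 h2.1 hEfin
  have hs : ∀ f : E, s f = (ANorm p q r ϑ₁ ϑ₂ f.1).toReal := fun _ => rfl
  have hK : ∀ (K : ℕ), ∀ f ∈ E,
      ANorm p q r (trunc ϑ₃ K) (trunc ϑ₄ K) f ≤ K * ANorm p q r ϑ₁ ϑ₂ f := by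
    intro K f hf
    unfold ANorm
    rw [mul_add]
    exact add_le_add (amalgam_trunc_le hp le_rfl h3 h1 (hE f hf).1 K)
      (amalgam_trunc_le hq hr h4 h2 (hE f hf).2.2 K)
  have hKfin : ∀ (K : ℕ), ∀ f ∈ E, ANorm p q r (trunc ϑ₃ K) (trunc ϑ₄ K) f < ⊤ :=
    fun K f hf => (hK K f hf).trans_lt
      (ENNReal.mul_lt_top (ENNReal.natCast_lt_top K) (hEfin f hf))
  let N : ℕ → Seminorm ℂ E := fun K => semiA hE hp hq hr (trunc ϑ₃ K) (trunc ϑ₄ K)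
    (trunc_meas h3.1 K) (trunc_meas h4.1 K) (hKfin K)
  have hN : ∀ K (f : E), N K f = (ANorm p q r (trunc ϑ₃ K) (trunc ϑ₄ K) f.1).toReal :=
    fun _ _ => rfl
  suffices hex : ∃ C : ℝ, 0 < C ∧ ∀ i x, N i x ≤ C * s x by
    obtain ⟨C, hC, hmain⟩ := hex
    refine ⟨C, hC, fun f hf => ?_⟩
    have hf' : f ∈ E := (memA_iff hp h1).1 hf
    rw [ANorm_trunc_sup hp hq hr h3 h4 (hE f hf')]
    refine iSup_le fun K => ?_
    have := hmain K ⟨f, hf'⟩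
    rw [hN, hs] at this
    rw [← ENNReal.ofReal_toReal (hKfin K f hf').ne, ← ENNReal.ofReal_toReal (hEfin f hf').ne,
      ← ENNReal.ofReal_mul hC.le]
    exact ENNReal.ofReal_le_ofReal this
  apply ubp s ?_ N
  · intro K
    refine ⟨K, fun f => ?_⟩
    rw [hN, hs]
    have := ENNReal.toReal_mono
      (ENNReal.mul_lt_top (ENNReal.natCast_lt_top K) (hEfin f.1 f.2)).ne (hK K f.1 f.2)
    simpa [ENNReal.toReal_mul] using this
  · intro f
    have hfin : ANorm p q r ϑ₃ ϑ₄ f.1 < ⊤ := (hsub f.1 ((memA_iff hp h1).2 f.2)).lt_top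
    refine ⟨(ANorm p q r ϑ₃ ϑ₄ f.1).toReal, fun K => ?_⟩
    rw [hN]
    refine ENNReal.toReal_mono hfin.ne ?_
    rw [ANorm_trunc_sup hp hq hr h3 h4 (hE f.1 f.2)]
    exact le_iSup (fun K : ℕ => ANorm p q r (trunc ϑ₃ K) (trunc ϑ₄ K) f.1) K
  · intro u hu
    have hsum : ∑' n, ANorm p q r ϑ₁ ϑ₂ (u n).1 ≠ ⊤ := by
      have h5 := hu.tsum_ofReal_ne_top
      simpa only [hs, ENNReal.ofReal_toReal (hEfin _ (u _).2).ne] using h5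
    obtain ⟨f, hf, hle⟩ := complete_aux hp hq hr h1 h2 (fun n => (u n).1)
      (fun n => hE _ (u n).2) hsum
    have hfE : f ∈ E := by
      refine ⟨hf, ?_⟩
      have := hle 0
      simp only [Finset.range_zero, Finset.sum_empty, sub_zero, add_zero] at this
      exact this.trans_lt hsum.lt_top
    refine ⟨⟨f, hfE⟩, ?_⟩
    have ht := ENNReal.tendsto_sum_nat_add (fun n => ANorm p q r ϑ₁ ϑ₂ (u n).1) hsum
    have ht2 : Tendsto (fun n => ANorm p q r ϑ₁ ϑ₂ (f - ∑ i ∈ Finset.range n, (u i).1))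
        atTop (𝓝 0) :=
      tendsto_of_tendsto_of_tendsto_of_le_of_le tendsto_const_nhds ht (fun _ => zero_le) hle
    have ht3 := (ENNReal.tendsto_toReal ENNReal.zero_ne_top).comp ht2
    refine ht3.congr fun n => ?_
    rw [map_sub_rev, hs]
    simp
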